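/- arXiv:2405.19742 — 5 statements merged into one kernel-verified Lean document; each statement's English description precedes it below -/
import Mathlib

section
/- Let H > 0 and B ∈ (0,1) ∪ (1,∞). Set c = (B²−1)/(6B), l = (B²−1) − 2Bc + (B²−1)c² − 2Bc³, m = 2B − 2c(B²−1) + 6Bc², n = 2B, and assume 4m³ + 27·n·l² ≠ 0. Let G(s) = B² + 2B·sinh(2Hs) − 1, let I = {s ∈ ℝ : G(s) > 0}, fix a basepoint s₁ ∈ I, and define on I the functions x(s) = (1/(2H))·√(G(s)) and z(s) = ∫_{s₁}^{s} (B·sinh(2Ht) − 1)/√(G(t)) dt. Then the spacelike CMC surface of revolution about the timelike z-axis, S = {(x(s)·cos θ, x(s)·sin θ, z(s)) : s ∈ I, θ ∈ ℝ} ⊆ ℝ³, is not algebraic. -/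
/-!
Let `x` be the radius of the profile curve, `z` its height and `y = 2 B cosh (2 H s)`. Then
`y ^ 2 = Q(x)` for a separable quartic `Q`, and, up to a nonvanishing speed, `(x, y, z)` is an
integral curve of the polynomial vector field `x′ = 2 y`, `y′ = Q′(x)`, `z′ = N(x)` on the
hyperelliptic cylinder `y ^ 2 = Q(x)`. The polynomial functions vanishing along an integral curve
form an ideal stable under the corresponding derivation, so it suffices that the coordinate ring
`R[z]`, `R = k[x, y] / (y ^ 2 - Q)`, has no proper nonzero stable ideal. For `R` this follows from
the separability of `Q`: the radical of a stable ideal is stable, so a nonzero stable ideal may be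
assumed to contain a separable `P(x)`, hence `y` (as `P′ y` lies in it), hence `1`. It passes to
`R[z]` because `N` is not a derivative in `R`: a primitive `a + b y` would satisfy
`(b ^ 2 Q)′ = b N`, which the degrees forbid. A polynomial vanishing on the surface restricts to
zero on every half-plane through the axis, as the profile curve is Zariski dense there, and
is therefore zero.
-/

open Polynomial QuadraticAlgebra
open scoped Differential

section DifferentialIdeals

variable {S A : Type*} [CommSemiring S] [CommRing A] [Algebra S A] {δ : Derivation S A A}

/-- Ideals stable under the derivation `δ`. -/
def IsDifferentialIdeal (δ : Derivation S A A) (I : Ideal A) : Prop :=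
  ∀ ⦃a⦄, a ∈ I → δ a ∈ I

/-- A ring is differentially simple for `δ` if `⊥` and `⊤` are its only `δ`-stable ideals. The
zero ring is allowed. -/
def IsDifferentiallySimple (δ : Derivation S A A) : Prop :=
  ∀ ⦃I : Ideal A⦄, IsDifferentialIdeal δ I → I = ⊥ ∨ I = ⊤

variable [Algebra ℚ A] {I : Ideal A}

theorem mem_of_natCast_mul_mem {n : ℕ} (hn : n ≠ 0) {a : A} (h : (n : A) * a ∈ I) :
    a ∈ I := by
  have hunit : IsUnit (n : A) := by
    simpa using (Nat.cast_ne_zero (R := ℚ).2 hn).isUnit.map (algebraMap ℚ A)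
  exact (I.unit_mul_mem_iff_mem hunit).1 h

-- Applying `δ` to `a ^ (m + 1) * δ a ^ (2 * k) ∈ I` trades a factor `a` for two factors `δ a`.
theorem IsDifferentialIdeal.pow_mul_deriv_pow_mem (hI : IsDifferentialIdeal δ I) {a : A}
    (k : ℕ) : ∀ {m : ℕ}, a ^ (m + k) ∈ I → a ^ m * δ a ^ (2 * k) ∈ I := by
  induction k with
  | zero => simp
  | succ k ih =>
    intro m h
    have hk : a ^ (m + 1) * δ a ^ (2 * k) ∈ I := ih (by rwa [add_right_comm])
    have hleibniz : ((m + 1 : ℕ) : A) * (a ^ m * δ a ^ (2 * (k + 1)))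
        = δ (a ^ (m + 1) * δ a ^ (2 * k)) * δ a
          - (2 * k : ℕ) * δ (δ a) * (a ^ (m + 1) * δ a ^ (2 * k)) := by
      rcases k with _ | k <;>
        simp only [Derivation.leibniz, Derivation.leibniz_pow, smul_eq_mul, nsmul_eq_mul,
          Nat.cast_add, Nat.cast_mul, Nat.cast_one, Nat.cast_zero, Nat.cast_ofNat, mul_add, mul_one,
          mul_zero, pow_zero, Nat.add_one_sub_one] <;>
        ring
    refine mem_of_natCast_mul_mem m.succ_ne_zero (hleibniz ▸ I.sub_mem ?_ ?_)
    · exact I.mul_mem_right _ (hI hk)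
    · exact I.mul_mem_left _ hk

theorem IsDifferentialIdeal.radical (hI : IsDifferentialIdeal δ I) :
    IsDifferentialIdeal δ I.radical := by
  rintro a ⟨k, hk⟩
  exact ⟨2 * k, by simpa using hI.pow_mul_deriv_pow_mem k (m := 0) (by simpa using hk)⟩

theorem IsDifferentiallySimple.of_isRadical
    (h : ∀ I : Ideal A, I.IsRadical → IsDifferentialIdeal δ I → I ≠ ⊥ → I = ⊤) :
    IsDifferentiallySimple δ := fun I hI => or_iff_not_imp_left.2 fun hbot =>
  Ideal.radical_eq_top.1 <| h _ I.radical_isRadical hI.radical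
    (ne_bot_of_le_ne_bot hbot Ideal.le_radical)

end DifferentialIdeals

section PolynomialExtension

variable {A : Type*} [CommRing A]

theorem mem_leadingCoeffNth_iff_coeff {I : Ideal A[X]} {n : ℕ} {a : A} :
    a ∈ I.leadingCoeffNth n ↔ ∃ F ∈ I, F.natDegree ≤ n ∧ F.coeff n = a := by
  simp only [Ideal.leadingCoeffNth, Ideal.degreeLE, Submodule.mem_map, Submodule.mem_inf,
    mem_degreeLE, Ideal.mem_ofPolynomial, lcoeff_apply, natDegree_le_iff_degree_le]
  exact ⟨fun ⟨F, ⟨hF, hI⟩, h⟩ => ⟨F, hI, hF, h⟩, fun ⟨F, hI, hF, h⟩ => ⟨F, ⟨hF, hI⟩, h⟩⟩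

variable [Differential A]

theorem coeff_implicitDeriv_C (f : A) (F : A[X]) (i : ℕ) :
    (Differential.implicitDeriv (C f) F).coeff i
      = (F.coeff i)′ + f * (F.coeff (i + 1) * (i + 1)) := by
  simp [Differential.implicitDeriv, coeff_derivative]

theorem natDegree_implicitDeriv_C_le (f : A) (F : A[X]) :
    (Differential.implicitDeriv (C f) F).natDegree ≤ F.natDegree := by
  refine natDegree_le_iff_coeff_eq_zero.2 fun i hi => ?_
  rw [coeff_implicitDeriv_C, coeff_eq_zero_of_natDegree_lt hi,
    coeff_eq_zero_of_natDegree_lt (hi.trans i.lt_succ_self)]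
  simp

theorem IsDifferentialIdeal.leadingCoeffNth {f : A} {I : Ideal A[X]}
    (hI : IsDifferentialIdeal (Differential.implicitDeriv (C f)) I) (n : ℕ) :
    IsDifferentialIdeal Differential.deriv (I.leadingCoeffNth n) := by
  intro a ha
  obtain ⟨F, hF, hdeg, rfl⟩ := mem_leadingCoeffNth_iff_coeff.1 ha
  refine mem_leadingCoeffNth_iff_coeff.2
    ⟨_, hI hF, (natDegree_implicitDeriv_C_le f F).trans hdeg, ?_⟩
  rw [coeff_implicitDeriv_C, coeff_eq_zero_of_natDegree_lt (Nat.lt_succ_of_le hdeg)]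
  simp

theorem exists_monic_forall_natDegree_le
    (hA : IsDifferentiallySimple (Differential.deriv : Derivation ℤ A A)) {f : A} {I : Ideal A[X]}
    (hI : IsDifferentialIdeal (Differential.implicitDeriv (C f)) I) (hbot : I ≠ ⊥) :
    ∃ F ∈ I, F.Monic ∧ ∀ P ∈ I, P ≠ 0 → F.natDegree ≤ P.natDegree := by
  classical
  obtain ⟨P₀, hP₀, hP₀0⟩ := Submodule.exists_mem_ne_zero_of_ne_bot hbot
  obtain ⟨P, ⟨hP, hP0⟩, hmin⟩ := exists_minimalFor_of_wellFoundedLT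
    (fun P : A[X] => P ∈ I ∧ P ≠ 0) natDegree ⟨P₀, hP₀, hP₀0⟩
  have hlead : P.leadingCoeff ∈ I.leadingCoeffNth P.natDegree :=
    mem_leadingCoeffNth_iff_coeff.2 ⟨P, hP, le_rfl, rfl⟩
  have htop : I.leadingCoeffNth P.natDegree = ⊤ :=
    (hA (hI.leadingCoeffNth _)).resolve_left fun h =>
      hP0 (leadingCoeff_eq_zero.1 ((Submodule.mem_bot A).1 (h ▸ hlead)))
  obtain ⟨F, hF, hdeg, hcoeff⟩ :=
    mem_leadingCoeffNth_iff_coeff.1 ((Ideal.eq_top_iff_one _).1 htop)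
  refine ⟨F, hF, monic_of_natDegree_le_of_coeff_eq_one _ hdeg hcoeff, fun R hR hR0 => ?_⟩
  rcases le_total P.natDegree R.natDegree with h | h
  · exact hdeg.trans h
  · exact hdeg.trans (hmin ⟨hR, hR0⟩ h)

theorem exists_deriv_eq_of_implicitDeriv_C_eq_zero [Algebra ℚ A] {f : A} {F : A[X]}
    (hF : F.Monic) (hdeg : F.natDegree ≠ 0) (hD : Differential.implicitDeriv (C f) F = 0) :
    ∃ g : A, g′ = f := by
  obtain ⟨n, hn⟩ := Nat.exists_eq_succ_of_ne_zero hdeg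
  have hn0 : (n + 1 : ℚ) ≠ 0 := by positivity
  have hlead : F.coeff (n + 1) = 1 := by simpa [hn] using hF.coeff_natDegree
  have hsub : (F.coeff n)′ + f * (n + 1) = 0 := by
    simpa [coeff_implicitDeriv_C, hlead] using congrArg (coeff · n) hD
  refine ⟨-((n + 1 : ℚ)⁻¹ • F.coeff n), ?_⟩
  have hcast : (n + 1 : A) = algebraMap ℚ A (n + 1) := by simp
  rw [map_neg, map_rat_smul, eq_neg_of_add_eq_zero_left hsub, smul_neg, neg_neg, hcast,
    Algebra.smul_def, mul_left_comm, ← map_mul, inv_mul_cancel₀ hn0, map_one, mul_one]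

theorem IsDifferentiallySimple.implicitDeriv_C [Algebra ℚ A]
    (hA : IsDifferentiallySimple (Differential.deriv : Derivation ℤ A A)) {f : A}
    (hf : ∀ g : A, g′ ≠ f) :
    IsDifferentiallySimple (Differential.implicitDeriv (C f)) := by
  refine fun I hI => or_iff_not_imp_left.2 fun hbot => ?_
  obtain ⟨F, hF, hmonic, hmin⟩ := exists_monic_forall_natDegree_le hA hI hbot
  by_cases hdeg : F.natDegree = 0
  · rwa [Ideal.eq_top_iff_one, ← hmonic.natDegree_eq_zero.1 hdeg]
  · have hD : Differential.implicitDeriv (C f) F = 0 := by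
      by_contra hne
      have hle := natDegree_implicitDeriv_C_le f F
      have heq := le_antisymm hle (hmin _ (hI hF) hne)
      refine hne (leadingCoeff_eq_zero.1 ?_)
      rw [leadingCoeff, heq, coeff_implicitDeriv_C, hmonic.coeff_natDegree,
        coeff_eq_zero_of_natDegree_lt F.natDegree.lt_succ_self]
      simp
    obtain ⟨g, hg⟩ := exists_deriv_eq_of_implicitDeriv_C_eq_zero hmonic hdeg hD
    exact (hf g hg).elim

end PolynomialExtension

section Hyperelliptic

variable {k : Type*} [Field k]

theorem not_isSquare_of_separable {Q : k[X]} (hsep : Q.Separable) (hdeg : Q.natDegree ≠ 0) :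
    ¬ IsSquare Q := by
  rintro ⟨c, rfl⟩
  have hc : IsUnit c := hsep.squarefree c dvd_rfl
  exact hdeg (natDegree_eq_zero_of_isUnit (hc.mul hc))

theorem exists_separable_mem_of_isRadical [PerfectField k] {J : Ideal k[X]} (hJ : J.IsRadical)
    (hbot : J ≠ ⊥) : ∃ P ∈ J, P.Separable := by
  obtain ⟨P, rfl⟩ := (inferInstance : J.IsPrincipal).principal
  have hP0 : P ≠ 0 := by simpa using hbot
  refine ⟨P, Ideal.mem_span_singleton_self P, PerfectField.separable_iff_squarefree.2 ?_⟩
  exact (isRadical_iff_squarefree_of_ne_zero hP0).1 (isRadical_iff_span_singleton.2 hJ)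

/-- The coordinate ring `k[x, y] / (y ^ 2 - Q(x))` of an affine hyperelliptic curve, with
`⟨a, b⟩` standing for `a + b * y` and `ω` for `y`. -/
abbrev HyperellipticRing (Q : k[X]) := QuadraticAlgebra k[X] Q 0

namespace HyperellipticRing

variable {Q : k[X]}

/-- The derivation `x′ = 2 * y`, `y′ = Q′(x)`, that is `2 * y * d/dx`. -/
noncomputable instance (Q : k[X]) : Differential (HyperellipticRing Q) where
  deriv := .mk'
    (AddMonoidHom.mk'
      (fun r => ⟨2 * derivative r.im * Q + r.im * derivative Q, 2 * derivative r.re⟩)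
      fun r s => by
        ext1 <;> simp only [re_add, im_add, derivative_add] <;> ring).toIntLinearMap
    fun r s => by
      ext1 <;>
        simp only [AddMonoidHom.coe_toIntLinearMap, AddMonoidHom.mk'_apply, re_mul, im_mul, re_add,
          im_add, smul_eq_mul, zero_mul, add_zero, derivative_add, derivative_mul] <;>
        ring

@[simp]
theorem re_deriv (r : HyperellipticRing Q) :
    (r′).re = 2 * derivative r.im * Q + r.im * derivative Q := rfl

@[simp]
theorem im_deriv (r : HyperellipticRing Q) : (r′).im = 2 * derivative r.re := rfl

theorem omega_mul_omega : (ω * ω : HyperellipticRing Q) = algebraMap k[X] _ Q := by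
  ext1 <;> simp

theorem deriv_omega :
    (ω : HyperellipticRing Q)′ = algebraMap k[X] _ (derivative Q) := by
  ext1 <;> simp

theorem deriv_algebraMap (P : k[X]) :
    (algebraMap k[X] (HyperellipticRing Q) P)′ = 2 * ω * algebraMap k[X] _ (derivative P) := by
  ext1 <;> simp

theorem norm_ne_zero (hQ : ¬ IsSquare Q) {r : HyperellipticRing Q} (hr : r ≠ 0) :
    r.norm ≠ 0 := by
  intro h
  have hsq : r.re ^ 2 = Q * r.im ^ 2 := by
    rw [QuadraticAlgebra.norm_def] at h
    linear_combination h
  obtain ⟨c, hc⟩ := (IsIntegrallyClosed.pow_dvd_pow_iff two_ne_zero).1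
    (hsq ▸ dvd_mul_left _ _ : r.im ^ 2 ∣ r.re ^ 2)
  have him : r.im ≠ 0 := fun h0 => hr <| QuadraticAlgebra.ext (by simpa [h0] using hc) h0
  refine hQ ⟨c, mul_right_cancel₀ (pow_ne_zero 2 him) ?_⟩
  rw [← hsq, hc]
  ring

theorem comap_algebraMap_ne_bot (hQ : ¬ IsSquare Q) {J : Ideal (HyperellipticRing Q)}
    (hJ : J ≠ ⊥) : J.comap (algebraMap k[X] (HyperellipticRing Q)) ≠ ⊥ := by
  obtain ⟨r, hr, hr0⟩ := Submodule.exists_mem_ne_zero_of_ne_bot hJ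
  refine Submodule.ne_bot_iff _ |>.2 ⟨r.norm, ?_, norm_ne_zero hQ hr0⟩
  rw [Ideal.mem_comap, QuadraticAlgebra.algebraMap_norm_eq_mul_star]
  exact J.mul_mem_right _ hr

theorem omega_mem_of_separable [CharZero k] {J : Ideal (HyperellipticRing Q)}
    (hJ : IsDifferentialIdeal Differential.deriv J) {P : k[X]} (hsep : P.Separable)
    (hP : algebraMap k[X] _ P ∈ J) : ω ∈ J := by
  obtain ⟨u, v, huv⟩ := hsep
  refine mem_of_natCast_mul_mem two_ne_zero ?_
  have key : ((2 : ℕ) : HyperellipticRing Q) * ω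
      = 2 * ω * algebraMap k[X] _ u * algebraMap k[X] _ P
        + algebraMap k[X] _ v * (algebraMap k[X] (HyperellipticRing Q) P)′ := by
    have h := congrArg (algebraMap k[X] (HyperellipticRing Q)) huv
    rw [map_add, map_mul, map_mul, map_one] at h
    rw [deriv_algebraMap, Nat.cast_ofNat]
    linear_combination -2 * ω * h
  exact key ▸ J.add_mem (J.mul_mem_left _ hP) (J.mul_mem_left _ (hJ hP))

theorem eq_top_of_omega_mem (hsep : Q.Separable) {J : Ideal (HyperellipticRing Q)}
    (hJ : IsDifferentialIdeal Differential.deriv J) (hω : ω ∈ J) : J = ⊤ := by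
  obtain ⟨u, v, huv⟩ := hsep
  have key : 1 = algebraMap k[X] _ u * ω * ω
      + algebraMap k[X] _ v * (ω : HyperellipticRing Q)′ := by
    rw [mul_assoc, omega_mul_omega, deriv_omega, ← map_mul, ← map_mul, ← map_add, huv, map_one]
  exact (Ideal.eq_top_iff_one _).2 <|
    key ▸ J.add_mem (J.mul_mem_left _ hω) (J.mul_mem_left _ (hJ hω))

theorem isDifferentiallySimple [CharZero k] (hsep : Q.Separable) (hQ : ¬ IsSquare Q) :
    IsDifferentiallySimple (Differential.deriv : Derivation ℤ (HyperellipticRing Q) _) := by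
  refine .of_isRadical fun J hrad hJ hbot => ?_
  obtain ⟨P, hP, hPsep⟩ := exists_separable_mem_of_isRadical
    (hrad.comap (algebraMap k[X] (HyperellipticRing Q))) (comap_algebraMap_ne_bot hQ hbot)
  exact eq_top_of_omega_mem hsep hJ (omega_mem_of_separable hJ hPsep hP)

theorem deriv_ne_algebraMap [CharZero k] {N : k[X]} (hN : N ≠ 0)
    (hdeg : N.natDegree + 1 < Q.natDegree) (r : HyperellipticRing Q) :
    r′ ≠ algebraMap k[X] _ N := by
  intro h
  have hre : 2 * derivative r.im * Q + r.im * derivative Q = N := congrArg QuadraticAlgebra.re h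
  have him : r.im ≠ 0 := by
    rintro h0
    exact hN (by simpa [h0] using hre.symm)
  have hQ : Q ≠ 0 := by
    rintro rfl
    simp at hdeg
  have hmul : derivative (r.im * r.im * Q) = r.im * N := by
    rw [← hre, derivative_mul, derivative_mul]
    ring
  have hnat := congrArg natDegree hmul
  rw [natDegree_derivative, natDegree_mul (mul_ne_zero him him) hQ,
    natDegree_mul him him, natDegree_mul him hN] at hnat
  lia

end HyperellipticRing

end Hyperelliptic

section IntegralCurves

variable {𝕜 S A : Type*} [NontriviallyNormedField 𝕜] [CommSemiring S] [CommRing A] [Algebra S A]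

/-- A family of points `φ t`, `t ∈ U`, of the spectrum of `A` moving along the vector field `δ` at
speed `h`: every `a : A` evaluated along `φ` has derivative `h t * φ t (δ a)`. As `φ` is only given
on `U`, the differentiated function is an arbitrary extension `f` of `t ↦ φ t a`. -/
def IsDerivationIntegralCurve {U : Set 𝕜} (δ : Derivation S A A) (h : 𝕜 → 𝕜)
    (φ : U → A →+* 𝕜) : Prop :=
  ∀ a : A, ∃ f : 𝕜 → 𝕜, ∀ t : U, f t = φ t a ∧ HasDerivAt f (h t * φ t (δ a)) t

namespace IsDerivationIntegralCurve

variable {U : Set 𝕜} {h : 𝕜 → 𝕜} {φ : U → A →+* 𝕜} {δ : Derivation S A A}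

theorem isDifferentialIdeal_iInf_ker (hφ : IsDerivationIntegralCurve δ h φ) (hU : IsOpen U)
    (hh : ∀ t ∈ U, h t ≠ 0) : IsDifferentialIdeal δ (⨅ t, RingHom.ker (φ t)) := by
  intro a ha
  simp only [Ideal.mem_iInf, RingHom.mem_ker] at ha ⊢
  intro t
  obtain ⟨f, hf⟩ := hφ a
  have hf0 : f =ᶠ[nhds (t : 𝕜)] 0 := by
    filter_upwards [hU.mem_nhds t.2] with u hu
    exact (hf ⟨u, hu⟩).1.trans (ha ⟨u, hu⟩)
  have hzero := (hf t).2.unique ((hasDerivAt_const (t : 𝕜) (0 : 𝕜)).congr_of_eventuallyEq hf0)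
  exact (mul_eq_zero.1 hzero).resolve_left (hh t t.2)

theorem eq_zero_of_forall_eq_zero (hφ : IsDerivationIntegralCurve δ h φ)
    (hδ : IsDifferentiallySimple δ) (hU : IsOpen U) (hne : U.Nonempty)
    (hh : ∀ t ∈ U, h t ≠ 0) {a : A} (ha : ∀ t, φ t a = 0) : a = 0 := by
  have hmem : a ∈ ⨅ t, RingHom.ker (φ t) := by simpa [Ideal.mem_iInf] using ha
  obtain hbot | htop := hδ (hφ.isDifferentialIdeal_iInf_ker hU hh)
  · simpa [hbot] using hmem
  · obtain ⟨t, ht⟩ := hne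
    exact ((RingHom.ker_ne_top (φ ⟨t, ht⟩)) (top_le_iff.1 (htop ▸ iInf_le _ _))).elim

theorem eval₂RingHom [Differential A] {f : A} {z : 𝕜 → 𝕜}
    (hφ : IsDerivationIntegralCurve Differential.deriv h φ)
    (hz : ∀ t : U, HasDerivAt z (h t * φ t f) t) :
    IsDerivationIntegralCurve (Differential.implicitDeriv (C f)) h
      fun t => Polynomial.eval₂RingHom (φ t) (z t) := by
  intro F
  induction F using Polynomial.induction_on' with
  | add F G hF hG =>
    obtain ⟨u, hu⟩ := hF
    obtain ⟨v, hv⟩ := hG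
    refine ⟨u + v, fun t => ⟨?_, ?_⟩⟩
    · rw [Pi.add_apply, (hu t).1, (hv t).1, map_add]
    · rw [map_add, map_add, mul_add]
      exact (hu t).2.add (hv t).2
  | monomial n a =>
    obtain ⟨u, hu⟩ := hφ a
    refine ⟨u * z ^ n, fun t => ⟨?_, ?_⟩⟩
    · simp [(hu t).1]
    · refine ((hu t).2.mul ((hz t).pow n)).congr_deriv ?_
      simp only [Pi.pow_apply, (hu t).1, Differential.implicitDeriv, Derivation.coe_add,
        Derivation.coe_smul, Pi.add_apply, Differential.mapCoeffs_monomial, Pi.smul_apply,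
        Derivation.restrictScalars_apply, derivative'_apply, derivative_monomial, smul_eq_mul,
        C_mul_monomial, coe_eval₂RingHom, eval₂_add, eval₂_monomial, map_mul, map_natCast]
      ring

end IsDerivationIntegralCurve

end IntegralCurves

section HyperellipticCurves

variable {𝕜 : Type*} [NontriviallyNormedField 𝕜] {Q : 𝕜[X]}

/-- Evaluation at the point `(x, y)` of the curve `y ^ 2 = Q(x)`. -/
def HyperellipticRing.evalHom {x y : 𝕜} (h : y ^ 2 = Q.eval x) : HyperellipticRing Q →+* 𝕜 where
  toFun r := r.re.eval x + r.im.eval x * y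
  map_one' := by simp
  map_zero' := by simp
  map_add' r s := by simp only [re_add, im_add, eval_add]; ring
  map_mul' r s := by
    simp only [re_mul, im_mul, eval_add, eval_mul, zero_mul, add_zero]
    linear_combination (-r.im.eval x * s.im.eval x) * h

theorem HyperellipticRing.evalHom_apply {x y : 𝕜} (h : y ^ 2 = Q.eval x)
    (r : HyperellipticRing Q) : evalHom h r = r.re.eval x + r.im.eval x * y := rfl

theorem HyperellipticRing.evalHom_comp_algebraMap {x y : 𝕜} (h : y ^ 2 = Q.eval x) :
    (evalHom h).comp (algebraMap 𝕜[X] (HyperellipticRing Q)) = evalRingHom x := by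
  ext <;> simp [evalHom_apply]

theorem HyperellipticRing.isDerivationIntegralCurve_evalHom {U : Set 𝕜} {h x y : 𝕜 → 𝕜}
    (hxy : ∀ t : U, y t ^ 2 = Q.eval (x t))
    (hx : ∀ t : U, HasDerivAt x (h t * (2 * y t)) t)
    (hy : ∀ t : U, HasDerivAt y (h t * (derivative Q).eval (x t)) t) :
    IsDerivationIntegralCurve (Differential.deriv : Derivation ℤ (HyperellipticRing Q) _) h
      fun t => evalHom (hxy t) := by
  refine fun r => ⟨fun t => r.re.eval (x t) + r.im.eval (x t) * y t, fun t => ⟨rfl, ?_⟩⟩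
  have hre := (r.re.hasDerivAt (x t)).comp (t : 𝕜) (hx t)
  have him := (r.im.hasDerivAt (x t)).comp (t : 𝕜) (hx t)
  refine (hre.add (him.mul (hy t))).congr_deriv ?_
  simp only [Function.comp_apply, evalHom_apply, re_deriv, im_deriv, eval_add, eval_mul, eval_ofNat]
  linear_combination (2 * h t * (derivative r.im).eval (x t)) * hxy t

/-- Zariski density in the plane. A polynomial in two variables is encoded as an element of
`k[X][X]`, whose outer variable is the second coordinate. -/
def IsZariskiDense {k : Type*} [CommRing k] (Γ : Set (k × k)) : Prop :=
  ∀ F : k[X][X], (∀ p ∈ Γ, F.evalEval p.1 p.2 = 0) → F = 0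

theorem IsZariskiDense.mono {k : Type*} [CommRing k] {Γ Γ' : Set (k × k)} (hΓ : IsZariskiDense Γ)
    (h : Γ ⊆ Γ') : IsZariskiDense Γ' := fun F hF => hΓ F fun p hp => hF p (h hp)

theorem isZariskiDense_of_hyperellipticIntegral [CharZero 𝕜] {N : 𝕜[X]} (hQ : Q.Separable)
    (hN : N ≠ 0) (hdeg : N.natDegree + 1 < Q.natDegree) {U : Set 𝕜} (hU : IsOpen U)
    (hne : U.Nonempty) {h x y z : 𝕜 → 𝕜} (hh : ∀ t ∈ U, h t ≠ 0)
    (hxy : ∀ t ∈ U, y t ^ 2 = Q.eval (x t))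
    (hx : ∀ t ∈ U, HasDerivAt x (h t * (2 * y t)) t)
    (hy : ∀ t ∈ U, HasDerivAt y (h t * (derivative Q).eval (x t)) t)
    (hz : ∀ t ∈ U, HasDerivAt z (h t * N.eval (x t)) t) :
    IsZariskiDense ((fun t => (x t, z t)) '' U) := by
  intro F hF
  have hsq : ¬ IsSquare Q := not_isSquare_of_separable hQ (by lia)
  have hsimple := (HyperellipticRing.isDifferentiallySimple hQ hsq).implicitDeriv_C
    (HyperellipticRing.deriv_ne_algebraMap hN hdeg)
  have hcurve := (HyperellipticRing.isDerivationIntegralCurve_evalHom (fun t : U => hxy t t.2)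
    (fun t => hx t t.2) (fun t => hy t t.2)).eval₂RingHom (f := algebraMap _ _ N) (z := z)
    fun t => by
      simpa [HyperellipticRing.evalHom_apply] using hz t t.2
  refine (map_eq_zero_iff (mapRingHom (algebraMap 𝕜[X] (HyperellipticRing Q)))
    (map_injective _ algebraMap_injective)).1 <|
    hcurve.eq_zero_of_forall_eq_zero hsimple hU hne hh fun t => ?_
  have hcomp := HyperellipticRing.evalHom_comp_algebraMap (hxy t t.2)
  rw [coe_mapRingHom, coe_eval₂RingHom, eval₂_map, hcomp, eval₂_evalRingHom]
  exact hF _ ⟨t, t.2, rfl⟩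

end HyperellipticCurves

section Revolution

/-- Restriction of a polynomial in three variables to the plane of the points
`(a * r, b * r, ζ)`, as a polynomial in `r` (inner variable) and `ζ` (outer variable). -/
noncomputable def planeSlice {R : Type*} [CommRing R] (a b : R) :
    MvPolynomial (Fin 3) R →ₐ[R] R[X][X] :=
  MvPolynomial.aeval ![C (C a * X), C (C b * X), X]

theorem evalEval_planeSlice {R : Type*} [CommRing R] (a b r ζ : R) (P : MvPolynomial (Fin 3) R) :
    (planeSlice a b P).evalEval r ζ = MvPolynomial.eval ![r * a, r * b, ζ] P := by
  have h : (aevalAeval r ζ).comp (planeSlice a b) = MvPolynomial.aeval ![r * a, r * b, ζ] := by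
    ext i
    fin_cases i <;> simp [planeSlice, mul_comm _ r]
  rw [← coe_aevalAeval_eq_evalEval, ← MvPolynomial.coe_aeval_eq_eval, ← h]
  rfl

theorem IsZariskiDense.eq_zero_of_rotate {Γ : Set (ℝ × ℝ)} (hΓ : IsZariskiDense Γ)
    {P : MvPolynomial (Fin 3) ℝ}
    (hP : ∀ p ∈ Γ, ∀ θ : ℝ,
      MvPolynomial.eval ![p.1 * Real.cos θ, p.1 * Real.sin θ, p.2] P = 0) : P = 0 := by
  have hslice (θ : ℝ) : planeSlice (Real.cos θ) (Real.sin θ) P = 0 := hΓ _ fun p hp => by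
    rw [evalEval_planeSlice, hP p hp θ]
  refine MvPolynomial.funext fun q => ?_
  let w : ℂ := ⟨q 0, q 1⟩
  have hq : q = ![‖w‖ * Real.cos w.arg, ‖w‖ * Real.sin w.arg, q 2] := by
    rw [Complex.norm_mul_cos_arg, Complex.norm_mul_sin_arg]
    ext i
    fin_cases i <;> rfl
  rw [hq, ← evalEval_planeSlice, hslice, evalEval_zero, map_zero]

end Revolution

section Profile

variable {H B : ℝ}

theorem hasDerivAt_integral_of_continuousOn {E : Type*} [NormedAddCommGroup E] [NormedSpace ℝ E]
    [CompleteSpace E] {f : ℝ → E} {U : Set ℝ} (hf : ContinuousOn f U) (hU : IsOpen U) {a s : ℝ}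
    (has : Set.uIcc a s ⊆ U) : HasDerivAt (fun u => ∫ t in a..u, f t) (f s) s :=
  have hs : s ∈ U := has Set.right_mem_uIcc
  intervalIntegral.integral_hasDerivAt_right (hf.mono has).intervalIntegrable
    (hf.stronglyMeasurableAtFilter hU s hs) (hf.continuousAt (hU.mem_nhds hs))

/-- The polynomial `Q` with `(2 * B * cosh (2 * H * s)) ^ 2 = Q(x(s))`, obtained by eliminating
`sinh (2 * H * s)` from `cosh ^ 2 = 1 + sinh ^ 2` and `(2 * H * x) ^ 2 = radicand H B s`. -/
noncomputable def profileQuartic (H B : ℝ) : ℝ[X] :=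
  ((C (2 * H) * X) ^ 2 - C (B ^ 2 - 1)) ^ 2 + C (4 * B ^ 2)

/-- The polynomial `N` with `N(x(s)) = 4 * (B * sinh (2 * H * s) - 1)`, so that
`z′(s) = N(x(s)) / (4 * √(radicand H B s))`. -/
noncomputable def heightNumerator (H B : ℝ) : ℝ[X] :=
  C 2 * ((C (2 * H) * X) ^ 2 - C (B ^ 2 + 1))

theorem natDegree_profileQuartic (hH : H ≠ 0) : (profileQuartic H B).natDegree = 4 := by
  unfold profileQuartic
  compute_degree!

theorem natDegree_heightNumerator (hH : H ≠ 0) : (heightNumerator H B).natDegree = 2 := by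
  unfold heightNumerator
  compute_degree!

theorem isCoprime_of_eq_C_add_mul {k : Type*} [Field k] {p q r : k[X]} {c : k} (hc : c ≠ 0)
    (h : p = C c + q * r) : IsCoprime p q := by
  have hunit : IsUnit (C c) := isUnit_C.2 hc.isUnit
  have hCq : IsCoprime (C c) q := by
    simpa using (isCoprime_mul_unit_left_left hunit 1 q).2 isCoprime_one_left
  exact h ▸ hCq.add_mul_left_left r

theorem derivative_profileQuartic (H B : ℝ) : derivative (profileQuartic H B)
    = C (16 * H ^ 2) * (X * ((C (2 * H) * X) ^ 2 - C (B ^ 2 - 1))) := by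
  simp only [profileQuartic, derivative_add, derivative_sub, derivative_mul, pow_two,
    derivative_C, derivative_X, map_mul, map_ofNat, derivative_ofNat]
  ring

theorem separable_profileQuartic (hH : H ≠ 0) (hB : B ≠ 0) : (profileQuartic H B).Separable := by
  let u : ℝ[X] := (C (2 * H) * X) ^ 2 - C (B ^ 2 - 1)
  let v : ℝ[X] := C (8 * H ^ 2) * X * (C (2 * H ^ 2) * X ^ 2 - C (B ^ 2 - 1))
  have hu : IsCoprime (profileQuartic H B) u := by
    refine isCoprime_of_eq_C_add_mul (c := 4 * B ^ 2) (r := u) (by positivity) ?_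
    simp only [profileQuartic, u]
    ring
  have hX : IsCoprime (profileQuartic H B) X := by
    refine isCoprime_of_eq_C_add_mul (c := (B ^ 2 + 1) ^ 2) (r := v) (by positivity) ?_
    simp only [profileQuartic, v, map_mul, map_sub, map_add, map_pow, map_ofNat, map_one]
    ring
  rw [separable_def, derivative_profileQuartic]
  exact (isCoprime_mul_unit_left_right (isUnit_C.2 (by positivity : 16 * H ^ 2 ≠ 0).isUnit) _ _).2
    (hX.mul_right hu)

/-- The function `G` under the square root in the parametrization. -/
noncomputable def radicand (H B s : ℝ) : ℝ := B ^ 2 + 2 * B * Real.sinh (2 * H * s) - 1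

/-- The radius `x` of the profile curve. -/
noncomputable def profileRadius (H B s : ℝ) : ℝ := 1 / (2 * H) * √(radicand H B s)

/-- The height `z` of the profile curve, with basepoint `s₁`. -/
noncomputable def profileHeight (H B s₁ s : ℝ) : ℝ :=
  ∫ t in s₁..s, (B * Real.sinh (2 * H * t) - 1) / √(radicand H B t)

theorem continuous_radicand (H B : ℝ) : Continuous (radicand H B) := by
  unfold radicand
  fun_prop

theorem isOpen_setOf_radicand_pos (H B : ℝ) : IsOpen {s | 0 < radicand H B s} :=
  isOpen_lt continuous_const (continuous_radicand H B)

theorem two_mul_profileRadius (hH : H ≠ 0) (s : ℝ) :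
    2 * H * profileRadius H B s = √(radicand H B s) := by
  rw [profileRadius]
  field_simp

theorem sq_two_mul_cosh_eq_eval_profileQuartic (hH : H ≠ 0) {s : ℝ} (hs : 0 < radicand H B s) :
    (2 * B * Real.cosh (2 * H * s)) ^ 2 = (profileQuartic H B).eval (profileRadius H B s) := by
  simp only [profileQuartic, eval_add, eval_sub, eval_mul, eval_pow, eval_C, eval_X,
    two_mul_profileRadius hH, Real.sq_sqrt hs.le]
  rw [mul_pow, Real.cosh_sq, radicand]
  ring

theorem hasDerivAt_profileRadius (hH : H ≠ 0) {s : ℝ} (hs : 0 < radicand H B s) :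
    HasDerivAt (profileRadius H B)
      (1 / (4 * √(radicand H B s)) * (2 * (2 * B * Real.cosh (2 * H * s)))) s := by
  have hrad : HasDerivAt (radicand H B) (2 * B * (Real.cosh (2 * H * s) * (2 * H))) s :=
    (((hasDerivAt_const_mul (2 * H)).sinh.const_mul (2 * B)).const_add (B ^ 2)).sub_const 1
  refine ((hrad.sqrt hs.ne').const_mul (1 / (2 * H))).congr_deriv ?_
  field_simp
  ring

theorem hasDerivAt_two_mul_cosh (hH : H ≠ 0) {s : ℝ} (hs : 0 < radicand H B s) :
    HasDerivAt (fun t => 2 * B * Real.cosh (2 * H * t))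
      (1 / (4 * √(radicand H B s)) * (derivative (profileQuartic H B)).eval (profileRadius H B s))
      s := by
  refine ((hasDerivAt_const_mul (2 * H)).cosh.const_mul (2 * B)).congr_deriv ?_
  have hsqrt : √(radicand H B s) ≠ 0 := (Real.sqrt_pos.2 hs).ne'
  simp only [derivative_profileQuartic, eval_mul, eval_sub, eval_pow, eval_C, eval_X,
    two_mul_profileRadius hH, Real.sq_sqrt hs.le]
  rw [profileRadius]
  field_simp
  rw [radicand]
  ring

theorem hasDerivAt_profileHeight (hH : H ≠ 0) {s₁ s : ℝ}
    (hs : Set.uIcc s₁ s ⊆ {t | 0 < radicand H B t}) :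
    HasDerivAt (profileHeight H B s₁)
      (1 / (4 * √(radicand H B s)) * (heightNumerator H B).eval (profileRadius H B s)) s := by
  have hpos : 0 < radicand H B s := hs Set.right_mem_uIcc
  have hcont : ContinuousOn (fun t => (B * Real.sinh (2 * H * t) - 1) / √(radicand H B t))
      {t | 0 < radicand H B t} :=
    ContinuousOn.div (by fun_prop) (continuous_radicand H B).sqrt.continuousOn
      fun t ht => (Real.sqrt_pos.2 ht).ne'
  refine (hasDerivAt_integral_of_continuousOn hcont
    (isOpen_setOf_radicand_pos H B) hs).congr_deriv ?_
  simp only [heightNumerator, eval_sub, eval_mul, eval_pow, eval_C, eval_X,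
    two_mul_profileRadius hH, Real.sq_sqrt hpos.le]
  have hsqrt : √(radicand H B s) ≠ 0 := (Real.sqrt_pos.2 hpos).ne'
  field_simp
  rw [radicand]
  ring

theorem isZariskiDense_profileCurve (hH : H ≠ 0) {s₁ : ℝ} (hs₁ : 0 < radicand H B s₁) :
    IsZariskiDense
      ((fun s => (profileRadius H B s, profileHeight H B s₁ s)) '' {s | 0 < radicand H B s}) := by
  have hB : B ≠ 0 := by
    rintro rfl
    norm_num [radicand] at hs₁
  obtain ⟨ε, hε, hball⟩ := Metric.isOpen_iff.1 (isOpen_setOf_radicand_pos H B) s₁ hs₁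
  have huIcc {s : ℝ} (hs : s ∈ Metric.ball s₁ ε) :
      Set.uIcc s₁ s ⊆ {t | 0 < radicand H B t} :=
    ((convex_ball s₁ ε).ordConnected.uIcc_subset (Metric.mem_ball_self hε) hs).trans hball
  have hN0 : heightNumerator H B ≠ 0 := by
    rintro h
    simpa [h] using natDegree_heightNumerator (B := B) hH
  exact (isZariskiDense_of_hyperellipticIntegral (separable_profileQuartic hH hB)
    hN0 (by rw [natDegree_heightNumerator hH, natDegree_profileQuartic hH]; norm_num)
    Metric.isOpen_ball ⟨s₁, Metric.mem_ball_self hε⟩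
    (fun s hs => one_div_ne_zero (mul_ne_zero four_ne_zero (Real.sqrt_pos.2 (hball hs)).ne'))
    (fun s hs => sq_two_mul_cosh_eq_eval_profileQuartic hH (hball hs))
    (fun s hs => hasDerivAt_profileRadius hH (hball hs))
    (fun s hs => hasDerivAt_two_mul_cosh hH (hball hs))
    (fun s hs => hasDerivAt_profileHeight hH (huIcc hs))).mono (Set.image_mono hball)

end Profile

theorem spacelike_cmc_revolution_timelike_axis_not_algebraic_general
    (H B : ℝ) (hH : H ≠ 0)
    (G : ℝ → ℝ) (hG : ∀ s, G s = B ^ 2 + 2 * B * Real.sinh (2 * H * s) - 1)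
    (I : Set ℝ) (hI : I = {s : ℝ | 0 < G s})
    (s₁ : ℝ) (hs₁ : s₁ ∈ I)
    (x z : ℝ → ℝ)
    (hx : ∀ s ∈ I, x s = (1 / (2 * H)) * Real.sqrt (G s))
    (hz : ∀ s ∈ I, z s = ∫ t in s₁..s,
      (B * Real.sinh (2 * H * t) - 1) / Real.sqrt (G t))
    (S : Set (Fin 3 → ℝ))
    (hS : S = {p : Fin 3 → ℝ | ∃ s ∈ I, ∃ θ : ℝ,
      p = ![x s * Real.cos θ, x s * Real.sin θ, z s]}) :
    ¬ ∃ P : MvPolynomial (Fin 3) ℝ, P ≠ 0 ∧ ∀ p ∈ S, MvPolynomial.eval p P = 0 := by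
  obtain rfl : G = radicand H B := funext hG
  subst hI hS
  rintro ⟨P, hP0, hP⟩
  refine hP0 ((isZariskiDense_profileCurve hH hs₁).eq_zero_of_rotate ?_)
  rintro _ ⟨s, hs, rfl⟩ θ
  have hxs : x s = profileRadius H B s := hx s hs
  have hzs : z s = profileHeight H B s₁ s := hz s hs
  simpa only [hxs, hzs] using hP _ ⟨s, hs, θ, rfl⟩

/-- The spacelike CMC surface of revolution about the timelike z-axis in
Lorentz–Minkowski space `E₁³` (Kenmotsu-type parametrization, parameter `B ∈ (0,1) ∪ (1,∞)`,
nonvanishing discriminant of the associated elliptic curve) is not algebraic. -/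
theorem spacelike_cmc_revolution_timelike_axis_not_algebraic
    (H B : ℝ) (hH : 0 < H) (hB : B ∈ Set.Ioo (0:ℝ) 1 ∪ Set.Ioi (1:ℝ))
    (c l m n : ℝ)
    (hc : c = (B ^ 2 - 1) / (6 * B))
    (hl : l = (B ^ 2 - 1) - 2 * B * c + (B ^ 2 - 1) * c ^ 2 - 2 * B * c ^ 3)
    (hm : m = 2 * B - 2 * c * (B ^ 2 - 1) + 6 * B * c ^ 2)
    (hn : n = 2 * B)
    (hdisc : 4 * m ^ 3 + 27 * n * l ^ 2 ≠ 0)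
    (G : ℝ → ℝ) (hG : ∀ s, G s = B ^ 2 + 2 * B * Real.sinh (2 * H * s) - 1)
    (I : Set ℝ) (hI : I = {s : ℝ | 0 < G s})
    (s₁ : ℝ) (hs₁ : s₁ ∈ I)
    (x z : ℝ → ℝ)
    (hx : ∀ s ∈ I, x s = (1 / (2 * H)) * Real.sqrt (G s))
    (hz : ∀ s ∈ I, z s = ∫ t in s₁..s,
      (B * Real.sinh (2 * H * t) - 1) / Real.sqrt (G t))
    (S : Set (Fin 3 → ℝ))
    (hS : S = {p : Fin 3 → ℝ | ∃ s ∈ I, ∃ θ : ℝ,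
      p = ![x s * Real.cos θ, x s * Real.sin θ, z s]}) :
    ¬ ∃ P : MvPolynomial (Fin 3) ℝ, P ≠ 0 ∧ ∀ p ∈ S, MvPolynomial.eval p P = 0 :=
  spacelike_cmc_revolution_timelike_axis_not_algebraic_general H B hH.ne' G hG I hI s₁ hs₁ x z
    hx hz S hS
end

section
/- Let H > 0 and B ∈ (0,1) ∪ (1,∞). Let F(s) = 1 + B² + 2B·sin(2Hs) (which is strictly positive for all s ∈ ℝ since B ≠ 1), and define y(s) = (1/(2H))·√(F(s)) and x(s) = ∫_{0}^{s} (1 + B·sin(2Ht))/√(F(t)) dt. Then the CMC surface of revolution in Euclidean space, S = {(x(s), y(s)·cos θ, y(s)·sin θ) : s ∈ ℝ, θ ∈ ℝ} ⊆ ℝ³ (an unduloid if 0 < B < 1, a nodoid if B > 1), is not algebraic. -/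
/-!
The generating curve is invariant, up to a nonzero translation along the axis, under one period of
its parameter. A polynomial vanishing on the surface therefore vanishes at infinitely many points
of every line parallel to the axis that meets the surface, hence on whole circular cylinders; since
the radius takes infinitely many values, it vanishes on infinitely many coaxial cylinders, hence
everywhere.

The axial displacement over one period is positive for `H > 0`, although the axial velocity changes
sign when `B > 1`: its values at two points half a period apart have a nonnegative sum, which is
positive at `u = 0`.
-/

open MvPolynomial Real Set intervalIntegral
open scoped AddConstMap

section Polynomials

theorem eval_add_smul_eq_zero_of_infinite {R σ : Type*} [CommRing R] [IsDomain R]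
    {P : MvPolynomial σ R} {p v : σ → R} {A : Set R} (hA : A.Infinite)
    (h : ∀ t ∈ A, eval (p + t • v) P = 0) (t : R) : eval (p + t • v) P = 0 := by
  let Q : Polynomial R := aeval (fun i => .C (p i) + .X * .C (v i)) P
  have eval_Q (t : R) : Q.eval t = eval (p + t • v) P := by
    rw [← Polynomial.coe_aeval_eq_eval, comp_aeval_apply, aeval_eq_eval]
    congr 2
    ext i
    simp [mul_comm t]
  have hQ : Q = 0 := Q.eq_zero_of_infinite_isRoot <|
    hA.mono fun t ht => (eval_Q t).trans (h t ht)
  rw [← eval_Q, hQ, Polynomial.eval_zero]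

theorem eq_zero_of_eval_cylinders_eq_zero {P : MvPolynomial (Fin 3) ℝ} {A : Set ℝ}
    (hA : A.Infinite)
    (h : ∀ r ∈ A, ∀ a θ : ℝ, eval ![a, r * cos θ, r * sin θ] P = 0) : P = 0 := by
  have eval_polar (a r θ : ℝ) : eval ![a, r * cos θ, r * sin θ] P = 0 := by
    have radial_line (r : ℝ) :
        ![a, r * cos θ, r * sin θ] = ![a, 0, 0] + r • ![0, cos θ, sin θ] := by
      simp
    rw [radial_line]
    exact eval_add_smul_eq_zero_of_infinite hA (fun r hr => radial_line r ▸ h r hr a θ) r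
  refine MvPolynomial.funext fun p => ?_
  let z : ℂ := ⟨p 1, p 2⟩
  have polar_coordinates : p = ![p 0, ‖z‖ * cos z.arg, ‖z‖ * sin z.arg] := by
    rw [Complex.norm_mul_cos_arg, Complex.norm_mul_sin_arg]
    ext i
    fin_cases i <;> rfl
  rw [polar_coordinates, eval_polar, map_zero]

end Polynomials

/-- The surface in `ℝ³` swept out by rotating the curve `s ↦ (x s, y s)` about the first axis. -/
def surfaceOfRevolution {ι : Type*} (x y : ι → ℝ) : Set (Fin 3 → ℝ) :=
  {p | ∃ s θ, p = ![x s, y s * cos θ, y s * sin θ]}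

theorem eq_zero_of_eval_surfaceOfRevolution_eq_zero {G : Type*} [AddMonoid G] {T : G} {L : ℝ}
    (hL : L ≠ 0) (x : G →+c[T, L] ℝ) {y : G → ℝ} (hyT : Function.Periodic y T)
    (hy : (range y).Infinite) {P : MvPolynomial (Fin 3) ℝ}
    (hP : ∀ p ∈ surfaceOfRevolution x y, eval p P = 0) : P = 0 := by
  refine eq_zero_of_eval_cylinders_eq_zero hy ?_
  rintro _ ⟨s, rfl⟩ a θ
  have eval_translate : ∀ t ∈ range ((↑) : ℕ → ℝ),
      eval (![x s, y s * cos θ, y s * sin θ] + t • ![L, 0, 0]) P = 0 := by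
    rintro _ ⟨n, rfl⟩
    refine hP _ ⟨s + n • T, θ, ?_⟩
    rw [AddConstMapClass.map_add_nsmul, hyT.nsmul n s]
    simp
  have := eval_add_smul_eq_zero_of_infinite (infinite_range_of_injective Nat.cast_injective)
    eval_translate ((a - x s) / L)
  simpa [hL] using this

section Kenmotsu

/-- The function `F` of Kenmotsu's parametrization in the angular variable `u = 2Hs`. -/
noncomputable def kenmotsuRadicand (B u : ℝ) : ℝ := 1 + B ^ 2 + 2 * B * sin u

/-- The derivative `dx/ds` of Kenmotsu's parametrization in the angular variable `u = 2Hs`; it is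
the cosine of the angle between the generating curve and the axis. For `B = ±1` the zeros of the
denominator are zeros of the numerator, and the value `0` there is the limit. -/
noncomputable def kenmotsuAxialVelocity (B u : ℝ) : ℝ :=
  (1 + B * sin u) / √(kenmotsuRadicand B u)

/-- The coordinate `x` along the axis in Kenmotsu's parametrization. -/
noncomputable def kenmotsuAxial (H B s : ℝ) : ℝ :=
  ∫ t in 0..s, kenmotsuAxialVelocity B (2 * H * t)

/-- The distance `y` to the axis in Kenmotsu's parametrization; it is signed, with the sign
of `H`. -/
noncomputable def kenmotsuRadius (H B s : ℝ) : ℝ :=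
  1 / (2 * H) * √(kenmotsuRadicand B (2 * H * s))

variable {H B : ℝ}

theorem continuous_kenmotsuRadicand (B : ℝ) : Continuous (kenmotsuRadicand B) := by
  unfold kenmotsuRadicand
  fun_prop

theorem kenmotsuRadicand_periodic (B : ℝ) : Function.Periodic (kenmotsuRadicand B) (2 * π) :=
  fun u => by simp only [kenmotsuRadicand, sin_add_two_pi]

theorem kenmotsuRadicand_eq_sq_add_sq (B u : ℝ) :
    kenmotsuRadicand B u = (1 + B * sin u) ^ 2 + (B * cos u) ^ 2 := by
  rw [kenmotsuRadicand, mul_pow, cos_sq']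
  ring

theorem kenmotsuRadicand_nonneg (B u : ℝ) : 0 ≤ kenmotsuRadicand B u := by
  rw [kenmotsuRadicand_eq_sq_add_sq]
  positivity

theorem kenmotsuRadicand_ne_zero (hB : B ^ 2 ≠ 1) (u : ℝ) : kenmotsuRadicand B u ≠ 0 := by
  intro h
  rw [kenmotsuRadicand_eq_sq_add_sq] at h
  have h_sin : 1 + B * sin u = 0 := by nlinarith [sq_nonneg (B * cos u)]
  have h_cos : B * cos u = 0 := by nlinarith [sq_nonneg (1 + B * sin u)]
  apply hB
  linear_combination -B ^ 2 * sin_sq_add_cos_sq u + (B * sin u - 1) * h_sin + B * cos u * h_cos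

theorem kenmotsuAxialVelocity_eq_add (B u : ℝ) :
    kenmotsuAxialVelocity B u =
      √(kenmotsuRadicand B u) / 2 + (1 - B ^ 2) / 2 / √(kenmotsuRadicand B u) := by
  have h_num : 1 + B * sin u = kenmotsuRadicand B u / 2 + (1 - B ^ 2) / 2 := by
    rw [kenmotsuRadicand]
    ring
  rw [kenmotsuAxialVelocity, h_num, add_div, div_right_comm, div_sqrt]

theorem continuous_kenmotsuAxialVelocity (B : ℝ) : Continuous (kenmotsuAxialVelocity B) := by
  have h_sqrt : Continuous fun u => √(kenmotsuRadicand B u) :=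
    (continuous_kenmotsuRadicand B).sqrt
  rw [funext (kenmotsuAxialVelocity_eq_add B)]
  by_cases hB : B ^ 2 = 1
  · simpa [hB] using h_sqrt.div_const 2
  · exact (h_sqrt.div_const 2).add <| continuous_const.div h_sqrt fun u =>
      sqrt_ne_zero'.2 <| (kenmotsuRadicand_nonneg B u).lt_of_ne' (kenmotsuRadicand_ne_zero hB u)

theorem kenmotsuAxialVelocity_periodic (B : ℝ) :
    Function.Periodic (kenmotsuAxialVelocity B) (2 * π) :=
  fun u => by
    simp only [kenmotsuAxialVelocity, sin_add_two_pi, kenmotsuRadicand_periodic B u]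

theorem add_div_sqrt_add_sub_div_sqrt_nonneg {a c : ℝ} (h : 1 + a ^ 2 ≤ c) :
    0 ≤ (1 + a) / √(c + 2 * a) + (1 - a) / √(c - 2 * a) := by
  wlog ha : 0 ≤ a generalizing a
  · have := this (a := -a) (by rwa [neg_sq]) (by linarith)
    rw [mul_neg, sub_neg_eq_add, sub_neg_eq_add, ← sub_eq_add_neg, ← sub_eq_add_neg] at this
    rwa [add_comm]
  rcases le_or_gt a 1 with ha1 | ha1
  · have : 0 ≤ 1 - a := sub_nonneg.2 ha1
    positivity
  have h_minus : 0 < c - 2 * a := by nlinarith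
  have h_plus : 0 < c + 2 * a := by linarith
  rw [← sub_neg_eq_add, sub_nonneg, ← neg_div, neg_sub,
    div_le_div_iff₀ (sqrt_pos.2 h_minus) (sqrt_pos.2 h_plus)]
  refine le_of_sq_le_sq ?_ (by positivity)
  calc ((a - 1) * √(c + 2 * a)) ^ 2 = (a - 1) ^ 2 * (c + 2 * a) := by
        rw [mul_pow, sq_sqrt h_plus.le]
    _ ≤ (a - 1) ^ 2 * (c + 2 * a) + 4 * a * (c - (1 + a ^ 2)) :=
        le_add_of_nonneg_right (mul_nonneg (by linarith) (sub_nonneg.2 h))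
    _ = (1 + a) ^ 2 * (c - 2 * a) := by ring
    _ = ((1 + a) * √(c - 2 * a)) ^ 2 := by rw [mul_pow, sq_sqrt h_minus.le]

theorem kenmotsuAxialVelocity_add_half_period_nonneg (B u : ℝ) :
    0 ≤ kenmotsuAxialVelocity B u + kenmotsuAxialVelocity B (u + π) := by
  have h : 1 + (B * sin u) ^ 2 ≤ 1 + B ^ 2 := by
    rw [mul_pow]
    gcongr
    exact mul_le_of_le_one_right (sq_nonneg B) (sin_sq_le_one u)
  simpa only [kenmotsuAxialVelocity, kenmotsuRadicand, sin_add_pi, mul_neg, ← sub_eq_add_neg,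
    ← mul_assoc] using add_div_sqrt_add_sub_div_sqrt_nonneg h

theorem integral_kenmotsuAxialVelocity_pos (B : ℝ) :
    0 < ∫ u in 0..2 * π, kenmotsuAxialVelocity B u := by
  have h_cont := continuous_kenmotsuAxialVelocity B
  have h_shift : Continuous fun u => kenmotsuAxialVelocity B (u + π) := by fun_prop
  have h_zero : 0 < kenmotsuAxialVelocity B 0 + kenmotsuAxialVelocity B (0 + π) := by
    simp only [kenmotsuAxialVelocity, kenmotsuRadicand, zero_add, sin_zero, sin_pi, mul_zero,
      add_zero]
    positivity
  calc 0 < ∫ u in 0..π, (kenmotsuAxialVelocity B u + kenmotsuAxialVelocity B (u + π)) :=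
        integral_pos pi_pos (h_cont.add h_shift).continuousOn
          (fun u _ => kenmotsuAxialVelocity_add_half_period_nonneg B u)
          ⟨0, left_mem_Icc.2 pi_pos.le, h_zero⟩
    _ = (∫ u in 0..π, kenmotsuAxialVelocity B u) + ∫ u in π..2 * π, kenmotsuAxialVelocity B u := by
        rw [integral_add (h_cont.intervalIntegrable _ _) (h_shift.intervalIntegrable _ _),
          integral_comp_add_right, zero_add, two_mul]
    _ = ∫ u in 0..2 * π, kenmotsuAxialVelocity B u :=
        integral_add_adjacent_intervals (h_cont.intervalIntegrable _ _)
          (h_cont.intervalIntegrable _ _)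

theorem two_mul_mul_add_pi_div (hH : H ≠ 0) (s : ℝ) :
    2 * H * (s + π / H) = 2 * H * s + 2 * π := by
  field_simp

theorem kenmotsuAxial_add_period (hH : H ≠ 0) (B s : ℝ) :
    kenmotsuAxial H B (s + π / H) =
      kenmotsuAxial H B s + (2 * H)⁻¹ * ∫ u in 0..2 * π, kenmotsuAxialVelocity B u := by
  have rescale (s : ℝ) : kenmotsuAxial H B s =
      (2 * H)⁻¹ * ∫ u in 0..2 * H * s, kenmotsuAxialVelocity B u := by
    rw [kenmotsuAxial, integral_comp_mul_left _ (by positivity), mul_zero, smul_eq_mul]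
  rw [rescale, rescale, two_mul_mul_add_pi_div hH,
    (kenmotsuAxialVelocity_periodic B).intervalIntegral_add_eq_add _ _
      (continuous_kenmotsuAxialVelocity B).intervalIntegrable, zero_add, mul_add]

theorem kenmotsuRadius_periodic (hH : H ≠ 0) (B : ℝ) :
    Function.Periodic (kenmotsuRadius H B) (π / H) := fun s => by
  rw [kenmotsuRadius, two_mul_mul_add_pi_div hH, kenmotsuRadicand_periodic, kenmotsuRadius]

theorem infinite_range_kenmotsuRadius (hH : H ≠ 0) (hB : B ≠ 0) :
    (range (kenmotsuRadius H B)).Infinite := by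
  have h_cont : Continuous (kenmotsuRadius H B) :=
    continuous_const.mul ((continuous_kenmotsuRadicand B).comp (continuous_const_mul _)).sqrt
  refine (isPreconnected_range h_cont).infinite_of_nontrivial
    ⟨_, mem_range_self 0, _, mem_range_self (π / 2 / (2 * H)), fun h => ?_⟩
  have h_radicand : kenmotsuRadicand B 0 = kenmotsuRadicand B (π / 2) := by
    rw [kenmotsuRadius, kenmotsuRadius, mul_zero, mul_div_cancel₀ _ (by positivity)] at h
    exact (sqrt_inj (kenmotsuRadicand_nonneg _ _) (kenmotsuRadicand_nonneg _ _)).1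
      (mul_left_cancel₀ (by positivity) h)
  simp [kenmotsuRadicand, hB] at h_radicand

end Kenmotsu

theorem cmc_revolution_euclidean_not_algebraic_general {H B : ℝ} (hH : H ≠ 0) (hB : B ≠ 0) :
    ¬ ∃ P : MvPolynomial (Fin 3) ℝ, P ≠ 0 ∧
      ∀ p ∈ surfaceOfRevolution (kenmotsuAxial H B) (kenmotsuRadius H B), eval p P = 0 := by
  rintro ⟨P, hP0, hP⟩
  have displacement_ne_zero : (2 * H)⁻¹ * ∫ u in 0..2 * π, kenmotsuAxialVelocity B u ≠ 0 :=
    mul_ne_zero (by positivity) (integral_kenmotsuAxialVelocity_pos B).ne'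
  exact hP0 <| eq_zero_of_eval_surfaceOfRevolution_eq_zero displacement_ne_zero
    ⟨kenmotsuAxial H B, kenmotsuAxial_add_period hH B⟩ (kenmotsuRadius_periodic hH B)
    (infinite_range_kenmotsuRadius hH hB) hP

/-- The nonzero CMC surfaces of revolution in Euclidean space `E³`
(unduloids for `0 < B < 1`, nodoids for `B > 1`, Kenmotsu's parametrization)
are not algebraic. -/
theorem cmc_revolution_euclidean_not_algebraic
    (H B : ℝ) (hH : 0 < H) (hB : B ∈ Set.Ioo (0:ℝ) 1 ∪ Set.Ioi (1:ℝ))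
    (F : ℝ → ℝ) (hF : ∀ s, F s = 1 + B ^ 2 + 2 * B * Real.sin (2 * H * s))
    (hFpos : ∀ s, 0 < F s)
    (x y : ℝ → ℝ)
    (hy : ∀ s, y s = (1 / (2 * H)) * Real.sqrt (F s))
    (hx : ∀ s, x s = ∫ t in (0:ℝ)..s,
      (1 + B * Real.sin (2 * H * t)) / Real.sqrt (F t))
    (S : Set (Fin 3 → ℝ))
    (hS : S = {p : Fin 3 → ℝ | ∃ s : ℝ, ∃ θ : ℝ,
      p = ![x s, y s * Real.cos θ, y s * Real.sin θ]}) :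
    ¬ ∃ P : MvPolynomial (Fin 3) ℝ, P ≠ 0 ∧ ∀ p ∈ S, MvPolynomial.eval p P = 0 := by
  have hB0 : B ≠ 0 := hB.elim (fun h => h.1.ne') fun h => (one_pos.trans h).ne'
  simpa only [hS, hx, hy, hF, surfaceOfRevolution, kenmotsuAxial, kenmotsuRadius,
    kenmotsuAxialVelocity, kenmotsuRadicand]
    using cmc_revolution_euclidean_not_algebraic_general hH.ne' hB0
end

section
/- Let H > 0, B > 0, set F(s) = 1 + B² − 2B·cosh(2Hs), let U = {s ∈ ℝ : F(s) > 0}, and on U define z(s) = (1/(2H))·√(F(s)) and x'(s) = (B·cosh(2Hs) − 1)/√(F(s)). Then for every s ∈ U: 2H·z(s)·x'(s) + (z·z')'(s) + 1 = 0, where (z·z')' is the derivative of the function t ↦ z(t)·z'(t). -/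
/-! The product `z z'` is half the derivative of `z²`, and `z² = F / (4H²)` on the open set `U`, so
no square root is left after one differentiation: `(z z')' = F'' / (8H²) = -B cosh (2Hs)`. The root
also drops out of `2H z x' = B cosh (2Hs) - 1`, and the hyperbolic cosines cancel. -/

open scoped Topology

theorem two_mul_mul_deriv_eq_of_sq_eventuallyEq {𝕜 : Type*} [NontriviallyNormedField 𝕜]
    {z g : 𝕜 → 𝕜} {g' t : 𝕜} (hz : DifferentiableAt 𝕜 z t) (hg : HasDerivAt g g' t)
    (hzg : (fun u => z u ^ 2) =ᶠ[𝓝 t] g) :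
    2 * (z t * deriv z t) = g' := by
  rw [← hg.deriv, ← hzg.deriv_eq, deriv_fun_pow hz]
  ring

theorem mul_deriv_eq_of_eventuallyEq_const_mul_sqrt {z f : ℝ → ℝ} {c f' t : ℝ}
    (hf : HasDerivAt f f' t) (hpos : 0 < f t) (hz : z =ᶠ[𝓝 t] fun u => c * √(f u)) :
    z t * deriv z t = c ^ 2 / 2 * f' := by
  have hdiff : DifferentiableAt ℝ z t :=
    ((hf.sqrt hpos.ne').const_mul c).differentiableAt.congr_of_eventuallyEq hz
  have hsq : (fun u => z u ^ 2) =ᶠ[𝓝 t] fun u => c ^ 2 * f u := by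
    filter_upwards [hz, hf.continuousAt.eventually_const_lt hpos] with u hzu hfu
    rw [hzu, mul_pow, Real.sq_sqrt hfu.le]
  linear_combination
    two_mul_mul_deriv_eq_of_sq_eventuallyEq hdiff (hf.const_mul (c ^ 2)) hsq / 2

theorem hasDerivAt_mul_deriv_of_eventuallyEq_const_mul_sqrt {z f f' : ℝ → ℝ} {c f'' s : ℝ}
    (hf : ∀ᶠ t in 𝓝 s, HasDerivAt f (f' t) t) (hf' : HasDerivAt f' f'' s) (hpos : 0 < f s)
    (hz : z =ᶠ[𝓝 s] fun t => c * √(f t)) :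
    HasDerivAt (fun t => z t * deriv z t) (c ^ 2 / 2 * f'') s := by
  refine (hf'.const_mul (c ^ 2 / 2)).congr_of_eventuallyEq ?_
  filter_upwards [hf, hf.self_of_nhds.continuousAt.eventually_const_lt hpos,
    hz.eventuallyEq_nhds] with t hft hpos_t hzt
  exact mul_deriv_eq_of_eventuallyEq_const_mul_sqrt hft hpos_t hzt

theorem hasDerivAt_const_sub_const_mul_cosh (a b k t : ℝ) :
    HasDerivAt (fun u => a - b * Real.cosh (k * u)) (-(b * k) * Real.sinh (k * t)) t :=
  (((hasDerivAt_const_mul k).cosh.const_mul b).const_sub a).congr_deriv (by ring)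

theorem hasDerivAt_const_mul_sinh (b k t : ℝ) :
    HasDerivAt (fun u => b * Real.sinh (k * u)) (b * k * Real.cosh (k * t)) t :=
  ((hasDerivAt_const_mul k).sinh.const_mul b).congr_deriv (by ring)

theorem spacelike_generating_curve_cmc_ode_first_general
    (H B : ℝ) (hH : H ≠ 0)
    (F : ℝ → ℝ) (hF : ∀ t, F t = 1 + B ^ 2 - 2 * B * Real.cosh (2 * H * t))
    (U : Set ℝ) (hU : U = {t : ℝ | 0 < F t})
    (z x' : ℝ → ℝ)
    (hz : ∀ t ∈ U, z t = (1 / (2 * H)) * Real.sqrt (F t))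
    (hx' : ∀ t ∈ U, x' t = (B * Real.cosh (2 * H * t) - 1) / Real.sqrt (F t)) :
    ∀ s ∈ U, 2 * H * z s * x' s + deriv (fun t => z t * deriv z t) s + 1 = 0 := by
  intro s hs
  have hF' (t : ℝ) : HasDerivAt F (-(2 * B * (2 * H)) * Real.sinh (2 * H * t)) t :=
    funext hF ▸ hasDerivAt_const_sub_const_mul_cosh (1 + B ^ 2) (2 * B) (2 * H) t
  have hpos : 0 < F s := by rwa [hU] at hs
  have hz_near : z =ᶠ[𝓝 s] fun t => 1 / (2 * H) * √(F t) := by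
    filter_upwards [(hF' s).continuousAt.eventually_const_lt hpos] with t ht
    exact hz t (hU ▸ ht)
  have hzx : 2 * H * z s * x' s = B * Real.cosh (2 * H * s) - 1 := by
    have hsqrt : √(F s) ≠ 0 := (Real.sqrt_pos.2 hpos).ne'
    rw [hz s hs, hx' s hs]
    field_simp
  have hzz' : deriv (fun t => z t * deriv z t) s = -(B * Real.cosh (2 * H * s)) := by
    rw [(hasDerivAt_mul_deriv_of_eventuallyEq_const_mul_sqrt (.of_forall hF')
      (hasDerivAt_const_mul_sinh _ _ s) hpos hz_near).deriv]
    field_simp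
  rw [hzx, hzz']
  ring

/-- The generating curve `(x(s), z(s))` of the spacelike CMC surface of
revolution about the spacelike x-axis satisfies `2H·z·x' + (z·z')' + 1 = 0` on
`U = {s | F s > 0}`. -/
theorem spacelike_generating_curve_cmc_ode_first
    (H B : ℝ) (hH : 0 < H) (hB : 0 < B)
    (F : ℝ → ℝ) (hF : ∀ t, F t = 1 + B ^ 2 - 2 * B * Real.cosh (2 * H * t))
    (U : Set ℝ) (hU : U = {t : ℝ | 0 < F t})
    (z x' : ℝ → ℝ)
    (hz : ∀ t ∈ U, z t = (1 / (2 * H)) * Real.sqrt (F t))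
    (hx' : ∀ t ∈ U, x' t = (B * Real.cosh (2 * H * t) - 1) / Real.sqrt (F t)) :
    ∀ s ∈ U, 2 * H * z s * x' s + deriv (fun t => z t * deriv z t) s + 1 = 0 :=
  spacelike_generating_curve_cmc_ode_first_general H B hH.ne' F hF U hU z x' hz hx'
end

section
/- Let H > 0 and B > 1, let s ≥ 0, and set c = (B²−1)/(6B), l = (B²−1) − 2Bc + (B²−1)c² − 2Bc³, m = 2B − 2c(B²−1) + 6Bc², n = 2B. Then ∫_{0}^{s} (B·sinh(2Ht) − 1)/√(B² + 2B·sinh(2Ht) − 1) dt = (1/(2H)) · ∫_{c}^{sinh(2Hs)+c} (B·w − (1 + Bc))/√(l + m·w + n·w³) dw. -/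
/-!
With `u = sinh (2Ht)` we have `du = 2H √(1 + u²) dt`, so absorbing `√(1 + u²) = cosh (2Ht)` into
the square root replaces the radicand `B² + 2Bu - 1` by the cubic `(B² - 1 + 2Bu)(1 + u²)`.
The value of `c` is the translation for which the quadratic term of this cubic in `w = u + c`
vanishes.
-/

theorem depressed_cubic_add_eq_mul {R : Type*} [CommRing R] {a b c : R} (h : a = 3 * b * c)
    (u : R) :
    (a - b * c + a * c ^ 2 - b * c ^ 3) + (b - 2 * c * a + 3 * b * c ^ 2) * (u + c)
      + b * (u + c) ^ 3 = (a + b * u) * (1 + u ^ 2) := by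
  linear_combination -(u + c) ^ 2 * h

theorem integral_cosh_smul_comp_sinh {E : Type*} [NormedAddCommGroup E] [NormedSpace ℝ E]
    (g : ℝ → E) (a b : ℝ) :
    ∫ x in a..b, Real.cosh x • g (Real.sinh x) = ∫ u in Real.sinh a..Real.sinh b, g u :=
  intervalIntegral.integral_deriv_smul_comp_of_deriv_nonneg Real.continuous_sinh.continuousOn
    (fun x _ => Real.hasDerivAt_sinh x) (fun x _ => (Real.cosh_pos x).le)

theorem sq_add_two_mul_mul_sub_one_nonneg {B u : ℝ} (hB : 1 ≤ B) (hu : 0 ≤ u) :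
    0 ≤ B ^ 2 + 2 * B * u - 1 := by
  have hB_sq : 1 ≤ B ^ 2 := one_le_pow₀ hB
  have hBu : 0 ≤ 2 * B * u := by positivity
  linarith

theorem div_sqrt_eq_cosh_mul_div_sqrt_cubic {B c l m n x : ℝ}
    (hc : B ^ 2 - 1 = 3 * (2 * B) * c)
    (hl : l = (B ^ 2 - 1) - 2 * B * c + (B ^ 2 - 1) * c ^ 2 - 2 * B * c ^ 3)
    (hm : m = 2 * B - 2 * c * (B ^ 2 - 1) + 6 * B * c ^ 2)
    (hn : n = 2 * B)
    (hrad : 0 ≤ B ^ 2 + 2 * B * Real.sinh x - 1) :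
    (B * Real.sinh x - 1) / √(B ^ 2 + 2 * B * Real.sinh x - 1) =
      Real.cosh x * ((B * (Real.sinh x + c) - (1 + B * c)) /
        √(l + m * (Real.sinh x + c) + n * (Real.sinh x + c) ^ 3)) := by
  have hcosh : 0 < Real.cosh x := Real.cosh_pos x
  have hnum : B * (Real.sinh x + c) - (1 + B * c) = B * Real.sinh x - 1 := by ring
  have hcubic : l + m * (Real.sinh x + c) + n * (Real.sinh x + c) ^ 3 =
      Real.cosh x ^ 2 * (B ^ 2 + 2 * B * Real.sinh x - 1) := by
    rw [Real.cosh_sq', hl, hm, hn]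
    linear_combination depressed_cubic_add_eq_mul hc (Real.sinh x)
  rw [hnum, hcubic, Real.sqrt_mul' _ hrad, Real.sqrt_sq hcosh.le, ← mul_div_assoc,
    mul_div_mul_left _ _ hcosh.ne']

theorem z_coordinate_substitution_depressed_general
    (H B : ℝ) (hH : H ≠ 0) (s : ℝ)
    (hrad : ∀ t ∈ Set.uIcc 0 s, 0 ≤ B ^ 2 + 2 * B * Real.sinh (2 * H * t) - 1)
    (c l m n : ℝ)
    (hc : c = (B ^ 2 - 1) / (6 * B))
    (hl : l = (B ^ 2 - 1) - 2 * B * c + (B ^ 2 - 1) * c ^ 2 - 2 * B * c ^ 3)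
    (hm : m = 2 * B - 2 * c * (B ^ 2 - 1) + 6 * B * c ^ 2)
    (hn : n = 2 * B) :
    (∫ t in (0:ℝ)..s, (B * Real.sinh (2 * H * t) - 1)
        / Real.sqrt (B ^ 2 + 2 * B * Real.sinh (2 * H * t) - 1))
      = (1 / (2 * H)) * ∫ w in c..(Real.sinh (2 * H * s) + c),
          (B * w - (1 + B * c)) / Real.sqrt (l + m * w + n * w ^ 3) := by
  have hB : B ≠ 0 := by
    rintro rfl
    have hrad_zero := hrad 0 Set.left_mem_uIcc
    norm_num at hrad_zero
  have hdepressed : B ^ 2 - 1 = 3 * (2 * B) * c := by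
    rw [hc]
    field_simp
    ring
  let g (w : ℝ) : ℝ := (B * w - (1 + B * c)) / √(l + m * w + n * w ^ 3)
  calc
    _ = ∫ t in (0 : ℝ)..s, Real.cosh (2 * H * t) • g (Real.sinh (2 * H * t) + c) :=
      intervalIntegral.integral_congr fun t ht =>
        div_sqrt_eq_cosh_mul_div_sqrt_cubic hdepressed hl hm hn (hrad t ht)
    _ = (2 * H)⁻¹ • ∫ x in 2 * H * 0..2 * H * s, Real.cosh x • g (Real.sinh x + c) :=
      intervalIntegral.integral_comp_mul_left (fun x => Real.cosh x • g (Real.sinh x + c))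
        (mul_ne_zero two_ne_zero hH)
    _ = (2 * H)⁻¹ • ∫ u in Real.sinh (2 * H * 0)..Real.sinh (2 * H * s), g (u + c) := by
      rw [integral_cosh_smul_comp_sinh fun u => g (u + c)]
    _ = 1 / (2 * H) * ∫ w in c..Real.sinh (2 * H * s) + c, g w := by
      rw [intervalIntegral.integral_comp_add_right, mul_zero, Real.sinh_zero, zero_add, smul_eq_mul,
        one_div]

/-- The substitutions `u = sinh(2Ht)` and `w = u + c` express the
z-coordinate of the generating curve of a spacelike CMC surface of revolution about
the timelike axis as an integral against the depressed cubic `l + mw + nw³`. -/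
theorem z_coordinate_substitution_depressed
    (H B : ℝ) (hH : 0 < H) (hB : 1 < B) (s : ℝ) (hs : 0 ≤ s)
    (c l m n : ℝ)
    (hc : c = (B ^ 2 - 1) / (6 * B))
    (hl : l = (B ^ 2 - 1) - 2 * B * c + (B ^ 2 - 1) * c ^ 2 - 2 * B * c ^ 3)
    (hm : m = 2 * B - 2 * c * (B ^ 2 - 1) + 6 * B * c ^ 2)
    (hn : n = 2 * B) :
    (∫ t in (0:ℝ)..s, (B * Real.sinh (2 * H * t) - 1)
        / Real.sqrt (B ^ 2 + 2 * B * Real.sinh (2 * H * t) - 1))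
      = (1 / (2 * H)) * ∫ w in c..(Real.sinh (2 * H * s) + c),
          (B * w - (1 + B * c)) / Real.sqrt (l + m * w + n * w ^ 3) := by
  have hrad : ∀ t ∈ Set.uIcc 0 s, 0 ≤ B ^ 2 + 2 * B * Real.sinh (2 * H * t) - 1 := fun t ht =>
    sq_add_two_mul_mul_sub_one_nonneg hB.le <| Real.sinh_nonneg_iff.mpr <|
      mul_nonneg (by positivity) (Set.uIcc_of_le hs ▸ ht).1
  exact z_coordinate_substitution_depressed_general H B hH.ne' s hrad c l m n hc hl hm hn
end

section
/- Let c ≠ 0 be a real number. Then there is no nonzero real polynomial P in two variables such that P(x, c·cos(x/c)) = 0 for every x ∈ ℝ; that is, the plane curve {(x, c·cos(x/c)) : x ∈ ℝ} is not algebraic. -/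
/-!
A nonzero polynomial cannot vanish at infinitely many points of each of infinitely many horizontal
lines. The graph of a periodic function meets every horizontal line that it meets at all in
infinitely many points, so it is not algebraic as soon as the function takes infinitely many values.
-/

theorem infinite_setOf_eq_of_periodic {α β : Type*} [AddLeftCancelMonoid α] {f : α → β} {T : α}
    (hf : Function.Periodic f T) (hT : ¬IsOfFinAddOrder T) (a : α) : {x | f x = f a}.Infinite := by
  have translates_injective : Function.Injective fun n : ℕ ↦ a + n • T :=
    (add_right_injective a).comp (injective_nsmul_iff_not_isOfFinAddOrder.mpr hT)
  refine (Set.infinite_range_of_injective translates_injective).mono ?_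
  rintro _ ⟨n, rfl⟩
  exact hf.nsmul n a

section MvPolynomial

variable {R : Type*} [CommRing R] [IsDomain R]

theorem mvPolynomial_eq_zero_of_infinite_fibers {n : ℕ} {P : MvPolynomial (Fin (n + 1)) R}
    {S : Fin n → Set R} (hS : ∀ i, (S i).Infinite)
    (hP : ∀ s ∈ Set.univ.pi S, {x | MvPolynomial.eval (Fin.cons x s) P = 0}.Infinite) :
    P = 0 := by
  have map_eval_eq_zero (s) (hs : s ∈ Set.univ.pi S) :
      (MvPolynomial.finSuccEquiv R n P).map (MvPolynomial.eval s) = 0 := by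
    refine Polynomial.eq_zero_of_infinite_isRoot _ ((hP s hs).mono fun x hx ↦ ?_)
    exact (MvPolynomial.eval_eq_eval_mv_eval' s x P).symm.trans hx
  have coeff_eq_zero (k : ℕ) : (MvPolynomial.finSuccEquiv R n P).coeff k = 0 := by
    refine MvPolynomial.funext_set S hS fun s hs ↦ ?_
    rw [← Polynomial.coeff_map, map_eval_eq_zero s hs, Polynomial.coeff_zero, map_zero]
  exact (map_eq_zero_iff _ (MvPolynomial.finSuccEquiv R n).injective).mp
    (Polynomial.ext coeff_eq_zero)

theorem mvPolynomial_eq_zero_of_eval_periodic_graph_eq_zero [CharZero R] {f : R → R} {T : R}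
    (hf : Function.Periodic f T) (hT : T ≠ 0) (hrange : (Set.range f).Infinite)
    {P : MvPolynomial (Fin 2) R} (hP : ∀ x, MvPolynomial.eval ![x, f x] P = 0) : P = 0 := by
  refine mvPolynomial_eq_zero_of_infinite_fibers (fun _ ↦ hrange) fun s hs ↦ ?_
  obtain ⟨a, ha⟩ := hs 0 trivial
  obtain rfl : s = ![f a] := by simpa [funext_iff] using ha.symm
  have T_infinite_order : ¬IsOfFinAddOrder T := not_isOfFinAddOrder_of_isAddTorsionFree hT
  refine (infinite_setOf_eq_of_periodic hf T_infinite_order a).mono fun x (hx : f x = f a) ↦ ?_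
  exact hx ▸ hP x

end MvPolynomial

/-- The generating curve `z = c·cos(x/c)` of the maximal spacelike
surface of revolution in `E₁³` is not an algebraic plane curve. -/
theorem catenary_type_curve_not_algebraic (c : ℝ) (hc : c ≠ 0) :
    ¬ ∃ P : MvPolynomial (Fin 2) ℝ, P ≠ 0 ∧
      ∀ x : ℝ, MvPolynomial.eval ![x, c * Real.cos (x / c)] P = 0 := by
  rintro ⟨P, hP_ne, hP⟩
  have periodic : Function.Periodic (fun x ↦ c * Real.cos (x / c)) (2 * Real.pi * c) :=
    (Real.cos_periodic.div_const c).comp (c * ·)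
  have infinite_range : (Set.range fun x ↦ c * Real.cos (x / c)).Infinite := by
    refine (Real.range_cos_infinite.image (mul_right_injective₀ hc).injOn).mono ?_
    rintro _ ⟨_, ⟨y, rfl⟩, rfl⟩
    exact ⟨y * c, by simp [hc]⟩
  exact hP_ne (mvPolynomial_eq_zero_of_eval_periodic_graph_eq_zero periodic
    (mul_ne_zero Real.two_pi_pos.ne' hc) infinite_range hP)
end
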